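/- Let ν > −1 and let (j_{ν,k})_{k≥1} be the strictly increasing enumeration of the positive zeros of the Bessel function J_ν. Then the configuration of squared zeros (j_{ν,k}²)_{k≥1} satisfies conditions (C.A): (i) for every α ∈ (1/2, 1), Σ_{k≥1} j_{ν,k}^{−2α} < ∞; and (ii) there exist β > 0 and C₂ > 0 such that for every i ≥ 1, Σ_{k ≠ i} |j_{ν,k}² − j_{ν,i}²|^{−1} ≤ C₂ (max(j_{ν,i}², 1))^{−β}. -/

import Mathlib

open Real

/-- The Bessel function of the first kind `J_ν(z)`. -/
noncomputable def besselJ (ν z : ℝ) : ℝ :=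
  ∑' n : ℕ, ((-1 : ℝ) ^ n / (Real.Gamma ((n : ℝ) + 1) * Real.Gamma ((n : ℝ) + 1 + ν))) *
    (z / 2) ^ (2 * (n : ℝ) + ν)

noncomputable def bcoef (μ : ℝ) (n : ℕ) : ℝ :=
  (-1 : ℝ) ^ n / (Real.Gamma ((n : ℝ) + 1) * Real.Gamma ((n : ℝ) + 1 + μ))

noncomputable def bG (μ t : ℝ) : ℝ := ∑' n : ℕ, bcoef μ n * t ^ n

lemma bcoef_succ (μ : ℝ) (n : ℕ) : bcoef μ (n+1) * ((n:ℝ)+1) = - bcoef (μ+1) n := by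
  unfold bcoef
  have h1 : Real.Gamma (((n+1:ℕ):ℝ) + 1) = ((n:ℝ)+1) * Real.Gamma ((n:ℝ)+1) := by
    push_cast
    exact Real.Gamma_add_one (by positivity)
  have h2 : ((n+1:ℕ):ℝ) + 1 + μ = (n:ℝ) + 1 + (μ + 1) := by push_cast; ring
  rw [h1, h2, pow_succ]
  have h3 : Real.Gamma ((n:ℝ)+1) ≠ 0 := (Real.Gamma_pos_of_pos (by positivity)).ne'
  by_cases h4 : Real.Gamma ((n:ℝ)+1+(μ+1)) = 0
  · simp [h4]
  · have : (n:ℝ)+1 ≠ 0 := by positivity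
    field_simp

lemma bcoef_rec (μ : ℝ) (hμ : -1 < μ) (n : ℕ) :
    bcoef μ n = ((n:ℝ) + 1 + μ) * bcoef (μ+1) n := by
  unfold bcoef
  have hp : 0 < (n:ℝ) + 1 + μ := by have : (0:ℝ) ≤ n := by positivity
                                    linarith
  have h2 : (n:ℝ) + 1 + (μ + 1) = (n:ℝ) + 1 + μ + 1 := by ring
  rw [h2, Real.Gamma_add_one hp.ne']
  have h3 : Real.Gamma ((n:ℝ)+1) ≠ 0 := (Real.Gamma_pos_of_pos (by positivity)).ne'
  have h4 : Real.Gamma ((n:ℝ)+1+μ) ≠ 0 := (Real.Gamma_pos_of_pos hp).ne'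
  field_simp

lemma bcoef_bound (μ : ℝ) (hμ : -1 < μ) : ∃ K : ℝ, 0 < K ∧ ∀ n, |bcoef μ n| ≤ K / (n.factorial : ℝ) := by
  set m := min (Real.Gamma (1+μ)) (Real.Gamma (2+μ)) with hm
  have hm0 : 0 < m := lt_min (Real.Gamma_pos_of_pos (by linarith)) (Real.Gamma_pos_of_pos (by linarith))
  have key1 : ∀ n : ℕ, m ≤ Real.Gamma ((n:ℝ) + 2 + μ) := by
    intro n
    induction n with
    | zero => simp [hm]
    | succ n ih =>
      have hn : (0:ℝ) ≤ n := by positivity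
      have h : ((n+1:ℕ):ℝ) + 2 + μ = ((n:ℝ) + 2 + μ) + 1 := by push_cast; ring
      rw [h, Real.Gamma_add_one (by linarith)]
      nlinarith
  have key : ∀ n : ℕ, m ≤ Real.Gamma ((n:ℝ) + 1 + μ) := by
    intro n
    cases n with
    | zero => simp [hm]
    | succ n =>
      have h : ((n+1:ℕ):ℝ) + 1 + μ = ((n:ℝ) + 2 + μ) := by push_cast; ring
      rw [h]; exact key1 n
  refine ⟨m⁻¹, by positivity, fun n => ?_⟩
  unfold bcoef
  have hg := hm0.trans_le (key n)
  have hf : (0:ℝ) < n.factorial := by positivity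
  rw [Real.Gamma_nat_eq_factorial, abs_div, abs_pow, abs_neg, abs_one, one_pow, abs_of_pos (by positivity)]
  rw [inv_eq_one_div, div_div, mul_comm]
  apply one_div_le_one_div_of_le (by positivity)
  exact mul_le_mul_of_nonneg_right (key n) hf.le

lemma bsummable (μ : ℝ) (hμ : -1 < μ) (t : ℝ) : Summable fun n => bcoef μ n * t ^ n := by
  obtain ⟨K, hK, h⟩ := bcoef_bound μ hμ
  apply Summable.of_norm_bounded (g := fun n => K * (|t| ^ n / (n.factorial:ℝ)))
  · exact (Real.summable_pow_div_factorial |t|).mul_left K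
  · intro n
    rw [Real.norm_eq_abs, abs_mul, abs_pow]
    calc _ ≤ K / (n.factorial:ℝ) * |t|^n := mul_le_mul_of_nonneg_right (h n) (by positivity)
      _ = _ := by ring

lemma bderiv_tsum (μ : ℝ) (hμ : -1 < μ) (t : ℝ) :
    HasSum (fun n : ℕ => bcoef μ n * (n * t ^ (n-1))) (- bG (μ+1) t) := by
  rw [← hasSum_nat_add_iff' 1]
  simp only [Finset.range_one, Finset.sum_singleton, Nat.cast_zero, zero_mul, mul_zero, sub_zero]
  have := (bsummable (μ+1) (by linarith) t).hasSum.neg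
  have e : (fun n : ℕ => bcoef μ (n+1) * (((n+1:ℕ):ℝ) * t ^ (n+1-1))) =
      fun n => -(bcoef (μ+1) n * t ^ n) := by
    ext n
    have := bcoef_succ μ n
    simp only [Nat.add_sub_cancel]
    push_cast
    rw [← mul_assoc, this]; ring
  rw [e]
  exact this

lemma bG_hasDerivAt (μ : ℝ) (hμ : -1 < μ) (t : ℝ) : HasDerivAt (bG μ) (- bG (μ+1) t) t := by
  set R := |t| + 1
  have hR : 0 < R := by positivity
  have hu : Summable fun n : ℕ => ‖bcoef μ n * (n * R ^ (n-1))‖ := (bderiv_tsum μ hμ R).summable.norm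
  have := hasDerivAt_tsum_of_isPreconnected (g := fun n y => bcoef μ n * y ^ n)
    (g' := fun n y => bcoef μ n * (n * y ^ (n-1))) (y₀ := 0) (y := t) hu
    (Metric.isOpen_ball (x := (0:ℝ)) (ε := R)) (convex_ball (0:ℝ) R).isPreconnected
    (fun n y _ => (hasDerivAt_pow n y).const_mul _) ?_ (by simp [hR]) (bsummable μ hμ 0) (by simp [R])
  · rw [(bderiv_tsum μ hμ t).tsum_eq] at this
    exact this
  · intro n y hy
    have hy' : |y| ≤ R := by simpa using (Metric.mem_ball.1 hy).le
    simp only [norm_mul, norm_pow, Real.norm_eq_abs]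
    rw [abs_of_pos hR]
    gcongr

lemma bG_rec (μ : ℝ) (hμ : -1 < μ) (t : ℝ) :
    bG μ t = (μ+1) * bG (μ+1) t - t * bG (μ+2) t := by
  have h1 := (bsummable (μ+1) (by linarith) t).hasSum.mul_left (μ+1)
  have h2 := (bderiv_tsum (μ+1) (by linarith) t).mul_left t
  have h3 := h1.add h2
  have h4 := (bsummable μ hμ t).hasSum
  have h5 : (fun n => bcoef μ n * t ^ n) = fun (n:ℕ) => (μ + 1) * (bcoef (μ + 1) n * t ^ n) + t * (bcoef (μ + 1) n * (n * t ^ (n-1))) := by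
    ext n
    rw [bcoef_rec μ hμ n]
    cases n with
    | zero => simp only [Nat.cast_zero, pow_zero]; ring
    | succ n => simp only [Nat.add_sub_cancel]; rw [pow_succ]; ring
  rw [h5] at h4
  have := h4.unique h3
  rw [← h5] at this
  have e : μ + 1 + 1 = μ + 2 := by ring
  rw [e] at this
  unfold bG at *
  linarith

lemma besselJ_eq (ν z : ℝ) (hz : 0 < z) : besselJ ν z = (z/2)^ν * bG ν (z^2/4) := by
  unfold besselJ bG
  rw [← tsum_mul_left]
  congr 1
  ext n
  have : (z/2)^(2*(n:ℝ)+ν) = (z/2)^ν * (z^2/4)^n := by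
    rw [Real.rpow_add (by positivity), mul_comm]
    congr 1
    rw [Real.rpow_mul (by positivity), Real.rpow_natCast]
    congr 1
    norm_num
    ring
  rw [this]
  unfold bcoef
  ring

noncomputable def bw (ν z : ℝ) : ℝ := bG ν (z^2/4)
noncomputable def bw' (ν z : ℝ) : ℝ := -(z/2) * bG (ν+1) (z^2/4)

lemma hsq (z : ℝ) : HasDerivAt (fun z : ℝ => z^2/4) (z/2) z := by
  have := (hasDerivAt_pow 2 z).div_const 4
  have e : ((2:ℕ):ℝ) * z ^ (2-1) / 4 = z / 2 := by norm_num; ring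
  rwa [e] at this

lemma bw_deriv (ν : ℝ) (hν : -1 < ν) (z : ℝ) : HasDerivAt (bw ν) (bw' ν z) z := by
  have := (bG_hasDerivAt ν hν (z^2/4)).comp z (hsq z)
  have e : -bG (ν+1) (z^2/4) * (z/2) = bw' ν z := by unfold bw'; ring
  rw [e] at this
  exact this

lemma bw'_deriv (ν : ℝ) (hν : -1 < ν) (z : ℝ) (hz : 0 < z) :
    HasDerivAt (bw' ν) (-((2*ν+1)/z) * bw' ν z - bw ν z) z := by
  have h := (bG_hasDerivAt (ν+1) (by linarith) (z^2/4)).comp z (hsq z)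
  have h2 := ((hasDerivAt_id z).div_const 2).neg.mul h
  refine HasDerivAt.congr_deriv h2 ?_
  have := bG_rec ν hν (z^2/4)
  have e : ν + 1 + 1 = ν + 2 := by ring
  simp only [Function.comp, id, Pi.neg_apply, bw', bw, e]
  rw [this]
  field_simp
  ring

lemma gap (f f' f'' : ℝ → ℝ) (a b K : ℝ) (hab : a < b) (hK : 0 ≤ K)
    (hf : ∀ x ∈ Set.Icc a b, HasDerivAt f (f' x) x)
    (hf' : ∀ x ∈ Set.Icc a b, HasDerivAt f' (f'' x) x)
    (hb : ∀ x ∈ Set.Icc a b, |f'' x| ≤ K * |f' x| + |f x|)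
    (ha0 : f a = 0) (hb0 : f b = 0) (hne : ∃ x ∈ Set.Icc a b, f x ≠ 0) :
    1 / (K+1) ≤ b - a := by
  have hc' : ContinuousOn f' (Set.Icc a b) := fun x hx => (hf' x hx).continuousAt.continuousWithinAt
  have hc : ContinuousOn f (Set.Icc a b) := fun x hx => (hf x hx).continuousAt.continuousWithinAt
  obtain ⟨c, hc1, hc2⟩ := exists_hasDerivAt_eq_zero hab hc (by rw [ha0, hb0])
    (fun x hx => hf x (Set.Ioo_subset_Icc_self hx))
  obtain ⟨x0, hx0, hmax⟩ := isCompact_Icc.exists_isMaxOn (Set.nonempty_Icc.2 hab.le) hc'.abs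
  set p := |f' x0| with hp
  have hmax' : ∀ x ∈ Set.Icc a b, |f' x| ≤ p := fun x hx => hmax hx
  have ham : a ∈ Set.Icc a b := Set.left_mem_Icc.2 hab.le
  have hcm := Set.Ioo_subset_Icc_self hc1
  have dist : ∀ x ∈ Set.Icc a b, ∀ y ∈ Set.Icc a b, |x - y| ≤ b - a := by
    intro x hx y hy
    exact abs_sub_le_of_le_of_le hx.1 hx.2 hy.1 hy.2
  have hp0 : 0 ≤ p := abs_nonneg _
  have hfm : ∀ x ∈ Set.Icc a b, |f x| ≤ p * (b - a) := by
    intro x hx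
    have := (convex_Icc a b).norm_image_sub_le_of_norm_hasDerivWithin_le
      (fun y hy => (hf y hy).hasDerivWithinAt) hmax' ham hx
    simp only [Real.norm_eq_abs, ha0, sub_zero] at this
    exact this.trans (mul_le_mul_of_nonneg_left (dist x hx a ham) hp0)
  have hbb : ∀ x ∈ Set.Icc a b, |f'' x| ≤ K * p + p * (b-a) := fun x hx =>
    (hb x hx).trans (add_le_add (mul_le_mul_of_nonneg_left (hmax' x hx) hK) (hfm x hx))
  have hpp : p ≤ (K * p + p * (b-a)) * (b - a) := by
    have := (convex_Icc a b).norm_image_sub_le_of_norm_hasDerivWithin_le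
      (fun y hy => (hf' y hy).hasDerivWithinAt) hbb hcm hx0
    simp only [Real.norm_eq_abs, hc2, sub_zero] at this
    have hba : 0 ≤ b - a := by linarith
    exact this.trans (mul_le_mul_of_nonneg_left (dist x0 hx0 c hcm) (by positivity))
  have hppos : 0 < p := by
    rcases hp0.lt_or_eq with h | h
    · exact h
    · exfalso
      obtain ⟨x, hx, hxn⟩ := hne
      have := hfm x hx
      rw [← h, zero_mul] at this
      exact hxn (abs_nonpos_iff.1 this)
  have h1 : 1 ≤ (K + (b-a)) * (b-a) := by
    by_contra hh
    push Not at hh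
    nlinarith
  rw [div_le_iff₀ (by linarith)]
  by_contra hh
  push Not at hh
  have : b - a < 1 := by nlinarith
  nlinarith

lemma uniform_gap (ν : ℝ) (hν : -1 < ν) (j : ℕ → ℝ)
    (hjpos : ∀ k, 0 < j k) (hjzero : ∀ k, besselJ ν (j k) = 0)
    (hjmono : StrictMono j)
    (hjall : ∀ z : ℝ, 0 < z → besselJ ν z = 0 → ∃ k, z = j k) :
    ∃ δ : ℝ, 0 < δ ∧ ∀ k, δ ≤ j (k+1) - j k := by
  have hz : ∀ z, 0 < z → (besselJ ν z = 0 ↔ bw ν z = 0) := by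
    intro z hz
    rw [besselJ_eq ν z hz]
    have : (z/2)^ν ≠ 0 := (Real.rpow_pos_of_pos (by positivity) _).ne'
    simp [this, bw]
  set K := |2*ν+1| / j 0 with hKdef
  have hK : 0 ≤ K := div_nonneg (abs_nonneg _) (hjpos 0).le
  refine ⟨1/(K+1), by positivity, fun k => ?_⟩
  have hlt : j k < j (k+1) := hjmono (Nat.lt_succ_self k)
  have pos : ∀ x ∈ Set.Icc (j k) (j (k+1)), 0 < x := fun x hx => (hjpos k).trans_le hx.1
  refine gap (bw ν) (bw' ν) (fun z => -((2*ν+1)/z) * bw' ν z - bw ν z) _ _ K hlt hK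
    (fun x _ => bw_deriv ν hν x) (fun x hx => bw'_deriv ν hν x (pos x hx)) ?_
    ((hz _ (hjpos _)).1 (hjzero _)) ((hz _ (hjpos _)).1 (hjzero _)) ?_
  · intro x hx
    refine (abs_sub _ _).trans ?_
    rw [abs_mul, abs_neg, abs_div, abs_of_pos (pos x hx)]
    have : j 0 ≤ x := (hjmono.monotone (Nat.zero_le k)).trans hx.1
    have h0 := hjpos 0
    rw [hKdef]
    gcongr
  · refine ⟨(j k + j (k+1))/2, ⟨by linarith, by linarith⟩, fun h => ?_⟩
    have hp : 0 < (j k + j (k+1))/2 := by have := hjpos k; have := hjpos (k+1); linarith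
    obtain ⟨m, hm⟩ := hjall _ hp ((hz _ hp).2 h)
    have h1 : j k < j m := by linarith
    have h2 : j m < j (k+1) := by linarith
    have := hjmono.lt_iff_lt.1 h1
    have := hjmono.lt_iff_lt.1 h2
    omega

lemma gap_mul (j : ℕ → ℝ) (δ : ℝ) (hg : ∀ k, δ ≤ j (k+1) - j k) (i n : ℕ) :
    δ * n ≤ j (i+n) - j i := by
  induction n with
  | zero => simp
  | succ n ih => have := hg (i+n); push_cast; rw [← add_assoc]; linarith

lemma gap_abs (j : ℕ → ℝ) (δ : ℝ) (hg : ∀ k, δ ≤ j (k+1) - j k) (i k : ℕ) :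
    δ * |(k:ℝ) - i| ≤ |j k - j i| := by
  rcases le_total i k with h | h
  · obtain ⟨n, rfl⟩ := Nat.exists_eq_add_of_le h
    have := gap_mul j δ hg i n
    have e : ((i+n:ℕ):ℝ) - i = n := by push_cast; ring
    rw [e, Nat.abs_cast]
    exact this.trans (le_abs_self _)
  · obtain ⟨n, rfl⟩ := Nat.exists_eq_add_of_le h
    have := gap_mul j δ hg k n
    have e : (k:ℝ) - ((k+n:ℕ):ℝ) = -n := by push_cast; ring
    rw [e, abs_neg, Nat.abs_cast, abs_sub_comm]
    exact this.trans (le_abs_self _)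

lemma term_bound (x y u : ℝ) (hx : 0 < x) (hy : 0 < y) (hu : 0 < u) (h : u ≤ |x - y|) :
    |x^2 - y^2|⁻¹ ≤ u ^ (-(3/2) : ℝ) * (y^2) ^ (-(1/4) : ℝ) := by
  have e1 : u ^ (-(3/2) : ℝ) = (u * √u)⁻¹ := by
    rw [Real.rpow_neg hu.le, Real.sqrt_eq_rpow]
    congr 1
    nth_rw 2 [← Real.rpow_one u]
    rw [← Real.rpow_add hu]; norm_num
  have e2 : (y^2) ^ (-(1/4) : ℝ) = (√y)⁻¹ := by
    rw [Real.rpow_neg (by positivity), Real.sqrt_eq_rpow, ← Real.rpow_natCast, ← Real.rpow_mul hy.le]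
    norm_num
  rw [e1, e2, ← mul_inv]
  have h1 : |x - y| ≤ x + y := by rw [abs_le]; constructor <;> linarith
  have h2 : √u * √y ≤ x + y := by
    have ha : √u ≤ √(x+y) := Real.sqrt_le_sqrt (h.trans h1)
    have hb : √y ≤ √(x+y) := Real.sqrt_le_sqrt (by linarith)
    calc √u * √y ≤ √(x+y) * √(x+y) := by gcongr
      _ = x + y := Real.mul_self_sqrt (by linarith)
  have hsu := Real.sqrt_pos.2 hu
  have hsy := Real.sqrt_pos.2 hy
  apply inv_anti₀ (by positivity)
  have e3 : x^2 - y^2 = (x - y) * (x + y) := by ring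
  rw [e3, abs_mul, abs_of_pos (by linarith : 0 < x + y), mul_assoc]
  gcongr

/-- The configuration of squared positive zeros of `J_ν` satisfies conditions (C.A). -/
theorem squared_bessel_zeros_satisfy_CA
    (ν : ℝ) (hν : -1 < ν) (j : ℕ → ℝ)
    (hjpos : ∀ k, 0 < j k) (hjzero : ∀ k, besselJ ν (j k) = 0)
    (hjmono : StrictMono j)
    (hjall : ∀ z : ℝ, 0 < z → besselJ ν z = 0 → ∃ k, z = j k) :
    (∀ α : ℝ, 1 / 2 < α → α < 1 → Summable fun k : ℕ => (j k) ^ (-(2 * α))) ∧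
      ∃ β : ℝ, 0 < β ∧ ∃ C₂ : ℝ, 0 < C₂ ∧
        ∀ i : ℕ,
          (Summable fun k : {k : ℕ // k ≠ i} => |(j k.1) ^ 2 - (j i) ^ 2|⁻¹) ∧
          (∑' k : {k : ℕ // k ≠ i}, |(j k.1) ^ 2 - (j i) ^ 2|⁻¹) ≤
            C₂ * (max ((j i) ^ 2) 1) ^ (-β) := by
  obtain ⟨δ, hδ, hg⟩ := uniform_gap ν hν j hjpos hjzero hjmono hjall
  constructor
  · intro α h1 h2
    rw [← summable_nat_add_iff 1]
    have hs : Summable fun n : ℕ => ((n:ℝ)) ^ (-(2*α)) := Real.summable_nat_rpow.2 (by linarith)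
    have hs' := ((summable_nat_add_iff 1).2 hs).mul_left (δ ^ (-(2*α)))
    refine Summable.of_nonneg_of_le (fun n => Real.rpow_nonneg (hjpos _).le _) (fun n => ?_) hs'
    rw [← Real.mul_rpow hδ.le (by positivity)]
    apply Real.rpow_le_rpow_of_nonpos (by positivity) _ (by linarith)
    have := gap_mul j δ hg 0 (n+1)
    have := hjpos 0
    simp only [zero_add] at *
    linarith
  · set S : ℝ := ∑' n : ℤ, |(n:ℝ)| ^ (-(3/2) : ℝ) with hS
    have hsum : Summable fun n : ℤ => |(n:ℝ)| ^ (-(3/2) : ℝ) :=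
      Real.summable_abs_int_rpow (by norm_num)
    have hS0 : 0 ≤ S := tsum_nonneg fun n => by positivity
    set m := min ((j 0)^2) 1 with hm
    have hm0 : 0 < m := lt_min (pow_pos (hjpos 0) 2) one_pos
    set D := δ ^ (-(3/2) : ℝ) with hD
    have hD0 : 0 < D := Real.rpow_pos_of_pos hδ _
    have hM0 : 0 < m ^ (-(1/4) : ℝ) := Real.rpow_pos_of_pos hm0 _
    refine ⟨1/4, by norm_num, D * S * m ^ (-(1/4) : ℝ) + 1, by positivity, fun i => ?_⟩
    have hji := hjpos i
    set Y := ((j i)^2) ^ (-(1/4) : ℝ) with hY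
    have hY0 : 0 < Y := Real.rpow_pos_of_pos (by positivity) _
    have hinj : Function.Injective (fun k : {k : ℕ // k ≠ i} => ((k.1:ℤ) - (i:ℤ))) := by
      intro a b h
      apply Subtype.ext
      simp only at h
      omega
    have hcomp := hsum.comp_injective hinj
    have hle : ∀ k : {k : ℕ // k ≠ i}, |(j k.1) ^ 2 - (j i) ^ 2|⁻¹ ≤
        (D * Y) * |(((k.1:ℤ) - (i:ℤ) : ℤ) : ℝ)| ^ (-(3/2) : ℝ) := by
      intro k
      have hk : 0 < |(k.1:ℝ) - i| := abs_pos.2 (sub_ne_zero.2 (by exact_mod_cast k.2))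
      have := term_bound (j k.1) (j i) (δ * |(k.1:ℝ) - i|) (hjpos _) hji (by positivity)
        (gap_abs j δ hg i k.1)
      rw [Real.mul_rpow hδ.le hk.le] at this
      push_cast
      refine this.trans (le_of_eq ?_)
      ring
    have hs2 : Summable fun k : {k : ℕ // k ≠ i} =>
        (D * Y) * |(((k.1:ℤ) - (i:ℤ) : ℤ) : ℝ)| ^ (-(3/2) : ℝ) := hcomp.mul_left (D * Y)
    have hs1 := Summable.of_nonneg_of_le (fun k => by positivity) hle hs2
    refine ⟨hs1, ?_⟩
    have hSle : ∑' k : {k : ℕ // k ≠ i}, |(((k.1:ℤ) - (i:ℤ) : ℤ) : ℝ)| ^ (-(3/2) : ℝ) ≤ S :=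
      tsum_comp_le_tsum_of_inj hsum (fun n => by positivity) hinj
    have hYle : Y ≤ m ^ (-(1/4) : ℝ) * (max ((j i) ^ 2) 1) ^ (-(1/4) : ℝ) := by
      rw [← Real.mul_rpow hm0.le (by positivity)]
      apply Real.rpow_le_rpow_of_nonpos (by positivity) _ (by norm_num)
      have h0i : (j 0)^2 ≤ (j i)^2 :=
        pow_le_pow_left₀ (hjpos 0).le (hjmono.monotone (Nat.zero_le i)) 2
      rcases le_total ((j i)^2) 1 with h | h
      · rw [max_eq_right h, mul_one]; exact (min_le_left _ _).trans h0i
      · rw [max_eq_left h]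
        have := min_le_right ((j 0)^2) 1
        nlinarith
    have hX0 : 0 < (max ((j i) ^ 2) 1) ^ (-(1/4) : ℝ) := Real.rpow_pos_of_pos (by positivity) _
    calc _ ≤ ∑' k : {k : ℕ // k ≠ i}, (D * Y) * |(((k.1:ℤ) - (i:ℤ) : ℤ) : ℝ)| ^ (-(3/2) : ℝ) :=
          hs1.tsum_le_tsum hle hs2
      _ = (D * Y) * ∑' k : {k : ℕ // k ≠ i}, |(((k.1:ℤ) - (i:ℤ) : ℤ) : ℝ)| ^ (-(3/2) : ℝ) :=
          tsum_mul_left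
      _ ≤ (D * Y) * S := by gcongr
      _ ≤ (D * (m ^ (-(1/4) : ℝ) * (max ((j i) ^ 2) 1) ^ (-(1/4) : ℝ))) * S := by gcongr
      _ ≤ _ := by nlinarith
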